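/- arXiv:2202.13719 — 2 statements merged into one kernel-verified Lean document; each statement's English description precedes it below -/
import Mathlib

section
/- Let V be a finite set and let 𝒯 be a finite family of 3-element subsets of V (an 'abstract triangulation') with |𝒯| = N ≥ 2. Define the dual graph on 𝒯 by making distinct members T, T' adjacent if and only if |T ∩ T'| = 2. Assume that (i) the dual graph is connected, and (ii) every 2-element subset of V is contained in at most 2 members of 𝒯. Then there exists a subset G ⊆ V with |G| ≤ ⌊N/2⌋ such that every member of 𝒯 contains at least one element of G, and the simple graph on G in which two distinct elements g, g' are adjacent if and only if some member of 𝒯 contains both g and g' is connected. -/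
/-- In a connected graph every vertex other than `r` has a neighbour one step closer to `r`. -/
theorem SimpleGraph.Connected.exists_adj_dist_eq_succ {α : Type*} {H : SimpleGraph α}
    (hH : H.Connected) {r x : α} (hx : x ≠ r) :
    ∃ y, H.Adj x y ∧ H.dist x r = H.dist y r + 1 := by
  obtain ⟨p, hp⟩ := hH.exists_walk_length_eq_dist x r
  cases p with
  | nil => exact absurd rfl hx
  | @cons _ y _ h p =>
    refine ⟨y, h, ?_⟩
    have hle := SimpleGraph.dist_le p
    have htri := hH.dist_triangle (u := x) (v := y) (w := r)
    rw [SimpleGraph.dist_eq_one_iff_adj.mpr h] at htri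
    rw [SimpleGraph.Walk.length_cons] at hp
    omega

/-- Two triangles that each share a side with a third one have a common vertex on it. -/
theorem exists_mem_of_inter_card_eq_two {V : Type*} [DecidableEq V] {A T B : Finset V}
    (hT : T.card = 3) (hA : (A ∩ T).card = 2) (hB : (B ∩ T).card = 2) :
    ∃ g, g ∈ A ∧ g ∈ T ∧ g ∈ B := by
  have hunion : (A ∩ T ∪ B ∩ T).card ≤ T.card := Finset.card_le_card
    (Finset.union_subset Finset.inter_subset_right Finset.inter_subset_right)
  have hsum := Finset.card_union_add_card_inter (A ∩ T) (B ∩ T)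
  obtain ⟨g, hg⟩ : (A ∩ T ∩ (B ∩ T)).Nonempty := Finset.card_pos.mp (by omega)
  simp only [Finset.mem_inter] at hg
  exact ⟨g, hg.1.1, hg.1.2, hg.2.1⟩

/-- In a finite rooted tree of triangles, with parent map `π` and depth `ρ`, in which every triangle
shares a side with its parent, at most half as many vertices as there are triangles suffice to
meet all these sides. -/
theorem exists_side_cover_of_rooted_tree {α V : Type*} [DecidableEq α] [DecidableEq V]
    (t : α → Finset V) (ht : ∀ x, (t x).card = 3) (r : α) (π : α → α) (ρ : α → ℕ)
    (hρr : ρ r = 0) (hρ : ∀ x, x ≠ r → ρ x = ρ (π x) + 1)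
    (hπ : ∀ x, x ≠ r → (t x ∩ t (π x)).card = 2) (S : Finset α) (hr : r ∈ S)
    (hS : ∀ x ∈ S, x ≠ r → π x ∈ S) :
    ∃ G : Finset V, 2 * G.card ≤ S.card ∧ (∀ g ∈ G, ∃ x, g ∈ t x) ∧
      ∀ x ∈ S, x ≠ r → ∃ g ∈ G, g ∈ t x ∧ g ∈ t (π x) := by
  induction S using Finset.strongInduction with
  | H S ih =>
  obtain ⟨v, hvS, hvmax⟩ := S.exists_max_image ρ ⟨r, hr⟩
  by_cases hvr : v = r
  · refine ⟨∅, by simp, by simp, fun x hx hxr => ?_⟩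
    have := hvmax x hx
    have := hρ x hxr
    rw [hvr] at *
    omega
  have hleaf : ∀ x ∈ S, x ≠ r → ∀ w, ρ w = ρ v → π x ≠ w := by
    rintro x hx hxr w hw rfl
    have := hvmax x hx
    have := hρ x hxr
    omega
  -- Removing two triangles whose sides towards their parents share a vertex `g`.
  have remove : ∀ w ∈ S, w ≠ v → w ≠ r → ∀ g, g ∈ t v → g ∈ t (π v) → g ∈ t w → g ∈ t (π w) →
      (∀ x ∈ S, x ≠ r → x ≠ v → π x ≠ w) →
      ∃ G : Finset V, 2 * G.card ≤ S.card ∧ (∀ g ∈ G, ∃ x, g ∈ t x) ∧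
        ∀ x ∈ S, x ≠ r → ∃ g ∈ G, g ∈ t x ∧ g ∈ t (π x) := by
    intro w hwS hwv hwr g hgv hgπv hgw hgπw hw
    have hwS' : w ∈ S.erase v := Finset.mem_erase.mpr ⟨hwv, hwS⟩
    obtain ⟨G, hcard, hmem, hcover⟩ := ih ((S.erase v).erase w)
      ((Finset.erase_subset _ _).trans_ssubset (Finset.erase_ssubset hvS))
      (by simp [hr, Ne.symm hvr, Ne.symm hwr])
      (by
        intro x hx hxr
        simp only [Finset.mem_erase] at hx ⊢
        exact ⟨hw x hx.2.2 hxr hx.2.1, hleaf x hx.2.2 hxr v rfl, hS x hx.2.2 hxr⟩)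
    refine ⟨insert g G, ?_, ?_, ?_⟩
    · have h₁ := Finset.card_insert_le g G
      have h₂ := Finset.card_erase_add_one hwS'
      have h₃ := Finset.card_erase_add_one hvS
      omega
    · intro g' hg'
      rcases Finset.mem_insert.mp hg' with rfl | hg'
      · exact ⟨v, hgv⟩
      · exact hmem g' hg'
    · intro x hx hxr
      by_cases hxv : x = v
      · exact ⟨g, Finset.mem_insert_self _ _, hxv ▸ hgv, hxv ▸ hgπv⟩
      by_cases hxw : x = w
      · exact ⟨g, Finset.mem_insert_self _ _, hxw ▸ hgw, hxw ▸ hgπw⟩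
      obtain ⟨g', hg', h⟩ := hcover x (by simp [hxv, hxw, hx]) hxr
      exact ⟨g', Finset.mem_insert_of_mem hg', h⟩
  by_cases hsib : ∃ w ∈ S, w ≠ v ∧ w ≠ r ∧ π w = π v
  · obtain ⟨w, hwS, hwv, hwr, hw⟩ := hsib
    obtain ⟨g, hgv, hgp, hgw⟩ :=
      exists_mem_of_inter_card_eq_two (ht (π v)) (hπ v hvr) (hw ▸ hπ w hwr)
    refine remove w hwS hwv hwr g hgv hgp hgw (hw ▸ hgp) fun x hx hxr _ => hleaf x hx hxr w ?_
    rw [hρ w hwr, hρ v hvr, hw]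
  push Not at hsib
  by_cases hpr : π v = r
  · obtain ⟨g, hg⟩ : (t v ∩ t (π v)).Nonempty := Finset.card_pos.mp (by rw [hπ v hvr]; omega)
    rw [Finset.mem_inter] at hg
    refine ⟨{g}, ?_, by simpa using ⟨v, hg.1⟩, fun x hx hxr => ?_⟩
    · exact Finset.one_lt_card.mpr ⟨v, hvS, r, hr, hvr⟩
    · by_cases hxv : x = v
      · exact ⟨g, Finset.mem_singleton_self g, hxv ▸ hg⟩
      refine absurd ?_ (hsib x hx hxv hxr)
      by_contra hne
      have h₁ := hvmax x hx
      have h₂ := hρ x hxr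
      have h₃ := hρ (π x) (hpr ▸ hne)
      have h₄ := hρ v hvr
      rw [hpr, hρr] at h₄
      omega
  · obtain ⟨g, hgv, hgp, hgpp⟩ := exists_mem_of_inter_card_eq_two (ht (π v)) (hπ v hvr)
      (Finset.inter_comm (t (π v)) _ ▸ hπ (π v) hpr)
    exact remove (π v) (hS v hvS hvr) (hleaf v hvS hvr v rfl) hpr g hgv hgp hgp hgpp
      fun x hx hxr hxv => hsib x hx hxv hxr

/-- Combinatorial core of Theorem 1: given an abstract triangulation `𝒯` (a family
of 3-element subsets of a finite vertex set `V`) with `N ≥ 2` triangles, connected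
dual graph (triangles adjacent iff they share exactly 2 vertices), and every
2-element subset contained in at most 2 triangles, there is a set `G` of at most
`⌊N/2⌋` vertices hitting every triangle whose mutual-visibility graph (two guards
adjacent iff they lie in a common triangle) is connected. -/
theorem cooperative_guards_abstract
    {V : Type*} [Fintype V] [DecidableEq V]
    (𝒯 : Finset (Finset V)) (N : ℕ)
    (hcard3 : ∀ T ∈ 𝒯, T.card = 3)
    (hN : 𝒯.card = N) (hN2 : 2 ≤ N)
    (hdual : (SimpleGraph.fromRel
      (fun T T' : {T // T ∈ 𝒯} => ((T : Finset V) ∩ (T' : Finset V)).card = 2)).Connected)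
    (hside : ∀ s : Finset V, s.card = 2 → (𝒯.filter (fun T => s ⊆ T)).card ≤ 2) :
    ∃ G : Finset V, G.card ≤ N / 2 ∧
      (∀ T ∈ 𝒯, ∃ g ∈ G, g ∈ T) ∧
      (SimpleGraph.fromRel
        (fun g g' : {g // g ∈ G} =>
          ∃ T ∈ 𝒯, (g : V) ∈ T ∧ (g' : V) ∈ T)).Connected := by
  classical
  set H := SimpleGraph.fromRel
    (fun T T' : {T // T ∈ 𝒯} => ((T : Finset V) ∩ (T' : Finset V)).card = 2) with hH
  obtain ⟨r⟩ := hdual.nonempty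
  have hparent : ∀ x, ∃ y, x ≠ r → H.Adj x y ∧ H.dist x r = H.dist y r + 1 := fun x => by
    by_cases hx : x = r
    · exact ⟨r, fun h => absurd hx h⟩
    · obtain ⟨y, hy⟩ := hdual.exists_adj_dist_eq_succ hx
      exact ⟨y, fun _ => hy⟩
  choose π hπ using hparent
  obtain ⟨G, hcard, hmem, hcover⟩ := exists_side_cover_of_rooted_tree
    (fun T : {T // T ∈ 𝒯} => (T : Finset V)) (fun T => hcard3 T T.2) r π (fun x => H.dist x r)
    SimpleGraph.dist_self (fun x hx => (hπ x hx).2)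
    (fun x hx => by
      have hadj := (hπ x hx).1
      rw [hH, SimpleGraph.fromRel_adj] at hadj
      rcases hadj.2 with h | h
      · exact h
      · rwa [Finset.inter_comm] at h)
    Finset.univ (Finset.mem_univ r) (fun _ _ _ => Finset.mem_univ _)
  simp only [Finset.card_univ, Fintype.card_coe, hN] at hcard
  obtain ⟨g₀, hg₀, hg₀r⟩ : ∃ g ∈ G, g ∈ (r : Finset V) := by
    obtain ⟨T, hT, hTr⟩ := Finset.exists_mem_ne (by omega : 1 < 𝒯.card) (r : Finset V)
    obtain ⟨x, hx, hmin⟩ := (Finset.univ.erase r).exists_min_image (fun x => H.dist x r)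
      ⟨⟨T, hT⟩, by simp [Subtype.ext_iff, hTr]⟩
    have hxr : x ≠ r := Finset.ne_of_mem_erase hx
    obtain ⟨g, hg, -, hgπ⟩ := hcover x (Finset.mem_univ x) hxr
    have hπx : π x = r := by
      by_contra hne
      have h₁ := hmin (π x) (by simp [hne])
      have h₂ := (hπ x hxr).2
      omega
    exact ⟨g, hg, hπx ▸ hgπ⟩
  refine ⟨G, by omega, fun T hT => ?_, ?_⟩
  · by_cases hTr : (⟨T, hT⟩ : {T // T ∈ 𝒯}) = r
    · exact ⟨g₀, hg₀, by simpa [← hTr] using hg₀r⟩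
    · obtain ⟨g, hg, hgT, -⟩ := hcover ⟨T, hT⟩ (Finset.mem_univ _) hTr
      exact ⟨g, hg, hgT⟩
  · set K := SimpleGraph.fromRel
      (fun g g' : {g // g ∈ G} => ∃ T ∈ 𝒯, (g : V) ∈ T ∧ (g' : V) ∈ T) with hK
    have hsame : ∀ (x : {T // T ∈ 𝒯}) (g g' : {g // g ∈ G}), (g : V) ∈ (x : Finset V) →
        (g' : V) ∈ (x : Finset V) → K.Reachable g g' := fun x g g' hg hg' => by
      by_cases h : g = g'
      · exact h ▸ SimpleGraph.Reachable.refl g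
      · refine SimpleGraph.Adj.reachable ?_
        rw [hK, SimpleGraph.fromRel_adj]
        exact ⟨h, Or.inl ⟨x, x.2, hg, hg'⟩⟩
    have hreach : ∀ (n : ℕ) (x : {T // T ∈ 𝒯}), H.dist x r = n → ∀ g : {g // g ∈ G},
        (g : V) ∈ (x : Finset V) → K.Reachable ⟨g₀, hg₀⟩ g := by
      intro n
      induction n with
      | zero =>
        intro x hx g hg
        obtain rfl := hdual.dist_eq_zero_iff.mp hx
        exact hsame x _ _ hg₀r hg
      | succ n ih =>
        intro x hx g hg
        have hxr : x ≠ r := by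
          rintro rfl
          simp at hx
        obtain ⟨g', hg', hg'x, hg'π⟩ := hcover x (Finset.mem_univ x) hxr
        have hdist := (hπ x hxr).2
        exact (ih (π x) (by omega) ⟨g', hg'⟩ hg'π).trans (hsame x _ _ hg'x hg)
    rw [SimpleGraph.connected_iff_exists_forall_reachable]
    refine ⟨⟨g₀, hg₀⟩, fun g => ?_⟩
    obtain ⟨x, hx⟩ := hmem g g.2
    exact hreach _ x rfl g hx
end

section
/- Let G be a finite simple graph on a vertex set V with |V| = N ≥ 2, and suppose G is a tree (connected and acyclic) in which every vertex has degree at most 3. Call a nonempty subset S ⊆ V a 'triplet' if |S| ≤ 3 and there exists a center c ∈ S such that every element of S other than c is adjacent to c in G. Then there exists a finite family F of triplets such that: (i) every vertex of V belongs to at least one member of F; (ii) the intersection graph of F — whose vertices are the members of F, with distinct members S, S' adjacent if and only if S ∩ S' ≠ ∅ — is connected; and (iii) |F| ≤ ⌊N/2⌋. -/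
/-- A `triplet` in a graph `G` is a nonempty set of at most 3 vertices having a
center `c` adjacent to every other element of the set. -/
def IsTriplet {V : Type*} [DecidableEq V] (G : SimpleGraph V) (S : Finset V) : Prop :=
  S.Nonempty ∧ S.card ≤ 3 ∧ ∃ c ∈ S, ∀ x ∈ S, x ≠ c → G.Adj c x

/-- `F` is a family of triplets covering `S`, of size at most `|S| / 2`, in which every member is
linked to a fixed one by a chain of successively intersecting members. -/
structure IsTripletCover {V : Type*} [DecidableEq V] (G : SimpleGraph V) (S : Finset V)
    (F : Finset (Finset V)) : Prop where
  isTriplet : ∀ A ∈ F, IsTriplet G A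
  covers : ∀ v ∈ S, ∃ A ∈ F, v ∈ A
  linked : ∃ R ∈ F, ∀ A ∈ F,
    Relation.ReflTransGen (fun A B => B ∈ F ∧ (A ∩ B).Nonempty) R A
  card_le : F.card ≤ S.card / 2

namespace IsTripletCover

variable {V : Type*} [DecidableEq V] {G : SimpleGraph V}

lemma singleton {S : Finset V} (hS : IsTriplet G S) (hcard : 2 ≤ S.card) :
    IsTripletCover G S {S} where
  isTriplet := by simpa using hS
  covers v hv := ⟨S, by simp, hv⟩
  linked := ⟨S, by simp, fun A hA => by
    rw [Finset.mem_singleton.1 hA]⟩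
  card_le := by rw [Finset.card_singleton]; omega

/-- A triplet with two new vertices that meets the covered set extends a triplet cover. -/
lemma insert_triplet {T : Finset V} {F : Finset (Finset V)} (hF : IsTripletCover G T F)
    {a b c : V} (ha : a ∉ T) (hb : b ∉ T) (hab : a ≠ b) (hc : c ∈ T)
    (habc : IsTriplet G {a, b, c}) :
    IsTripletCover G (insert a (insert b T)) (insert {a, b, c} F) where
  isTriplet A hA := by
    rcases Finset.mem_insert.1 hA with rfl | hA
    exacts [habc, hF.isTriplet A hA]
  covers v hv := by
    by_cases hvT : v ∈ T
    · obtain ⟨A, hA, hvA⟩ := hF.covers v hvT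
      exact ⟨A, Finset.mem_insert_of_mem hA, hvA⟩
    · refine ⟨{a, b, c}, Finset.mem_insert_self _ _, ?_⟩
      simp only [Finset.mem_insert, Finset.mem_singleton] at hv ⊢
      tauto
  linked := by
    obtain ⟨R, hR, hlink⟩ := hF.linked
    have hmono : ∀ A ∈ F, Relation.ReflTransGen
        (fun A B => B ∈ insert {a, b, c} F ∧ (A ∩ B).Nonempty) R A := fun A hA =>
      Relation.ReflTransGen.mono (fun _ _ h => ⟨Finset.mem_insert_of_mem h.1, h.2⟩) _ _ (hlink A hA)
    refine ⟨R, Finset.mem_insert_of_mem hR, fun A hA => ?_⟩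
    rcases Finset.mem_insert.1 hA with rfl | hA
    · obtain ⟨B, hB, hcB⟩ := hF.covers c hc
      exact (hmono B hB).tail ⟨Finset.mem_insert_self _ _, c, by simp [hcB]⟩
    · exact hmono A hA
  card_le := by
    have h := Finset.card_insert_le {a, b, c} F
    have h' := hF.card_le
    have haT : a ∉ insert b T := by simp [hab, ha]
    rw [Finset.card_insert_of_notMem haT, Finset.card_insert_of_notMem hb]
    omega

lemma exists_insert {T : Finset V} (hT : 2 ≤ T.card → ∃ F, IsTripletCover G T F)
    {a b c : V} (ha : a ∉ T) (hb : b ∉ T) (hab : a ≠ b) (hc : c ∈ T)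
    (habc : IsTriplet G {a, b, c}) :
    ∃ F, IsTripletCover G (insert a (insert b T)) F := by
  by_cases h : 2 ≤ T.card
  · obtain ⟨F, hF⟩ := hT h
    exact ⟨_, hF.insert_triplet ha hb hab hc habc⟩
  · have hTc : T = {c} := by
      refine Finset.eq_singleton_iff_unique_mem.2 ⟨hc, fun x hx => ?_⟩
      exact Finset.card_le_one.1 (by omega) x hx c hc
    subst hTc
    refine ⟨_, singleton habc ?_⟩
    rw [Finset.card_insert_of_notMem (by simp_all)]
    simp_all

/-- The intersection graph of a triplet cover is connected. -/
lemma connected {S : Finset V} {F : Finset (Finset V)} (hF : IsTripletCover G S F) :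
    (SimpleGraph.fromRel
      (fun A B : {A // A ∈ F} => ((A : Finset V) ∩ (B : Finset V)).Nonempty)).Connected := by
  obtain ⟨R, hR, hlink⟩ := hF.linked
  refine SimpleGraph.connected_iff_exists_forall_reachable _ |>.2 ⟨⟨R, hR⟩, fun ⟨A, hA⟩ => ?_⟩
  induction hlink A hA with
  | refl => rfl
  | @tail B C hRB hBC ih =>
    have hB : B ∈ F := by
      rcases hRB.cases_tail with rfl | ⟨_, _, h⟩
      exacts [hR, h.1]
    refine (ih hB).trans ?_
    by_cases hne : B = C
    · subst hne; rfl
    · exact SimpleGraph.Adj.reachable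
        ((SimpleGraph.fromRel_adj _ _ _).2 ⟨by simpa using hne, Or.inl hBC.2⟩)

end IsTripletCover

lemma isTriplet_of_adj {V : Type*} [DecidableEq V] {G : SimpleGraph V} {S : Finset V} {c : V}
    (hcard : S.card ≤ 3) (hc : c ∈ S) (h : ∀ x ∈ S, x ≠ c → G.Adj c x) : IsTriplet G S :=
  ⟨⟨c, hc⟩, hcard, c, hc, h⟩

/-- Given a parent map towards a root that lowers the depth by one, every finite set of at least
two vertices that contains the root and is closed under taking parents has a triplet cover. -/
lemma exists_isTripletCover_of_parent {V : Type*} [DecidableEq V] {G : SimpleGraph V}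
    {r : V} {d : V → ℕ} {par : V → V} (hadj : ∀ x, x ≠ r → G.Adj (par x) x)
    (hd : ∀ x, x ≠ r → d (par x) + 1 = d x) (hr : d r = 0)
    (S : Finset V) (hrS : r ∈ S) (hS : ∀ x ∈ S, x ≠ r → par x ∈ S) (hcard : 2 ≤ S.card) :
    ∃ F, IsTripletCover G S F := by
  induction S using Finset.strongInduction with
  | H S ih =>
  obtain ⟨v, hvS, hmax⟩ := S.exists_max_image d ⟨r, hrS⟩
  have hvr : v ≠ r := by
    rintro rfl
    obtain ⟨x, hx, hxv⟩ := Finset.exists_mem_ne (Nat.lt_of_succ_le hcard) v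
    have := hd x hxv
    have := hmax x hx
    omega
  have hpS := hS v hvS hvr
  have hpv := hadj v hvr
  have hdv := hd v hvr
  have hpar : ∀ x ∈ S, x ≠ r → par x ≠ v := fun x hx hxr h => by
    have h1 := hd x hxr
    have h2 := hmax x hx
    rw [h] at h1
    omega
  by_cases hw : ∃ w ∈ S, w ≠ v ∧ w ≠ r ∧ par w = par v
  · obtain ⟨w, hwS, hwv, hwr, hwp⟩ := hw
    have hpw := hadj w hwr
    have hdw := hd w hwr
    rw [hwp] at hpw hdw
    have hpar' : ∀ x ∈ S, x ≠ r → par x ≠ w := fun x hx hxr h => by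
      have h1 := hd x hxr
      have h2 := hmax x hx
      rw [h] at h1
      omega
    have hdecomp : S = insert v (insert w ((S.erase w).erase v)) := by
      ext x; simp only [Finset.mem_insert, Finset.mem_erase]; grind
    have hsub : (S.erase w).erase v ⊂ S :=
      (Finset.erase_subset _ _).trans_ssubset (Finset.erase_ssubset hwS)
    rw [hdecomp]
    refine IsTripletCover.exists_insert (c := par v) (ih _ hsub ?_ ?_) (by simp) (by simp)
      hwv.symm ?_ (isTriplet_of_adj (c := par v) Finset.card_le_three (by simp) ?_)
    · simp [hrS, hvr.symm, hwr.symm]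
    · intro x hx hxr
      have hxS : x ∈ S := hsub.subset hx
      simp [hpar x hxS hxr, hpar' x hxS hxr, hS x hxS hxr]
    · simp [hpS, hpv.ne, hpw.ne]
    · grind
  · push Not at hw
    by_cases hpr : par v = r
    · have hSeq : S = {v, r} := by
        ext x
        simp only [Finset.mem_insert, Finset.mem_singleton]
        refine ⟨fun hx => ?_, by grind⟩
        by_contra! hne
        have hxp := hw x hx hne.1 hne.2
        have h1 := hd x hne.2
        have h2 := hmax x hx
        rw [hpr] at hdv hxp
        have := hd (par x) hxp
        omega
      refine ⟨_, IsTripletCover.singleton (isTriplet_of_adj (c := r) ?_ hrS ?_) hcard⟩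
      · rw [hSeq]; exact Finset.card_le_two.trans (by norm_num)
      · rw [hSeq]; grind
    · have hqS := hS _ hpS hpr
      have hqp := hadj _ hpr
      have hdecomp : S = insert v (insert (par v) ((S.erase (par v)).erase v)) := by
        ext x; simp only [Finset.mem_insert, Finset.mem_erase]; grind
      have hsub : (S.erase (par v)).erase v ⊂ S :=
        (Finset.erase_subset _ _).trans_ssubset (Finset.erase_ssubset hpS)
      rw [hdecomp]
      refine IsTripletCover.exists_insert (c := par (par v)) (ih _ hsub ?_ ?_) (by simp) (by simp)
        hpv.ne' ?_ (isTriplet_of_adj (c := par v) Finset.card_le_three (by simp) ?_)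
      · simp [hrS, hvr.symm, Ne.symm hpr]
      · intro x hx hxr
        simp only [Finset.mem_erase] at hx
        simp [hpar x hx.2.2 hxr, hw x hx.2.2 hx.1 hxr, hS x hx.2.2 hxr]
      · simp [hqS, hqp.ne, hpar _ hpS hpr]
      · have := hqp.symm
        grind

lemma SimpleGraph.Connected.exists_adj_dist_add_one_eq {V : Type*} {G : SimpleGraph V}
    (hG : G.Connected) {r x : V} (hx : x ≠ r) : ∃ y, G.Adj y x ∧ G.dist r y + 1 = G.dist r x := by
  obtain ⟨p, hp⟩ := hG.exists_walk_length_eq_dist x r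
  cases p with
  | nil => exact absurd rfl hx
  | @cons _ y _ h q =>
    refine ⟨y, h.symm, ?_⟩
    have h1 := SimpleGraph.dist_le q
    have h2 := hG.dist_triangle (u := x) (v := y) (w := r)
    rw [SimpleGraph.dist_eq_one_iff_adj.2 h] at h2
    rw [SimpleGraph.Walk.length_cons] at hp
    rw [SimpleGraph.dist_comm (u := r), SimpleGraph.dist_comm (u := r)]
    omega

/-- For every tree `G` on `N ≥ 2` vertices with maximum degree at most 3 there is a
family `F` of triplets covering all vertices, whose intersection graph (distinct
members adjacent iff they intersect) is connected, with `|F| ≤ ⌊N/2⌋`. -/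
theorem triplet_cover_of_tree
    {V : Type*} [Fintype V] [DecidableEq V] (N : ℕ)
    (hV : Fintype.card V = N) (hN : 2 ≤ N)
    (G : SimpleGraph V) [DecidableRel G.Adj]
    (htree : G.IsTree) (hdeg : ∀ v : V, G.degree v ≤ 3) :
    ∃ F : Finset (Finset V),
      (∀ S ∈ F, IsTriplet G S) ∧
      (∀ v : V, ∃ S ∈ F, v ∈ S) ∧
      (SimpleGraph.fromRel
        (fun S S' : {S // S ∈ F} => ((S : Finset V) ∩ (S' : Finset V)).Nonempty)).Connected ∧
      F.card ≤ N / 2 := by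
  obtain ⟨r⟩ := htree.connected.nonempty
  choose! par hadj hd using fun x (hx : x ≠ r) =>
    htree.connected.exists_adj_dist_add_one_eq hx
  obtain ⟨F, hF⟩ := exists_isTripletCover_of_parent hadj hd SimpleGraph.dist_self Finset.univ
    (Finset.mem_univ r) (fun _ _ _ => Finset.mem_univ _) (by rwa [Finset.card_univ, hV])
  refine ⟨F, hF.isTriplet, fun v => hF.covers v (Finset.mem_univ v), hF.connected, ?_⟩
  have h := hF.card_le
  rwa [Finset.card_univ, hV] at h
end
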